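/- The metric space (𝓜, d_𝓜) is path-connected: for η,ν ∈ 𝓜, the map t ↦ (1−t)η + tν for t ∈ [0,1] is a continuous path from η to ν, and moreover d_𝓜(η, (1−t)η + tν) ≤ d_𝓜(η,ν) for all t ∈ [0,1]. -/

import Mathlib

open MeasureTheory Set Filter
open scoped ENNReal Classical

variable {X : Type*} [MetricSpace X] [MeasurableSpace X]

/-- Total mass of a measure, as a real number. -/
noncomputable def mass (ν : Measure X) : ℝ := (ν Set.univ).toReal

/-- The support of a measure. -/
def msupp (ν : Measure X) : Set X := {x : X | ∀ ε : ℝ, 0 < ε → 0 < ν (Metric.ball x ε)}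

/-- The set `𝓜` of measures dominated by `μ` with compact support. -/
def MM (μ : Measure X) : Set (Measure X) := {ν | ν ≤ μ ∧ IsCompact (msupp ν)}

/-- Gauge function `h` used in the definition of the mass transport metric. -/
def IsGauge (h : ℝ → ℝ) : Prop :=
  StrictMonoOn h (Set.Ici 0) ∧ ContinuousOn h (Set.Ici 0) ∧ h 0 = 0 ∧
  Tendsto (fun ε => h ε / ε) (nhdsWithin 0 (Set.Ioi 0)) (nhds 0) ∧
  (∀ a b : ℝ, 0 ≤ a → 0 ≤ b → h a + h b ≤ h (a + b)) ∧
  Tendsto h atTop atTop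

/-- `Γ_{ε,δ}(ν,η) ≠ ∅`: existence of a countable mass-transport decomposition. -/
def GammaDecomp (μ : Measure X) (ε δ : ℝ) (ν η : Measure X) : Prop :=
  ∃ νi ηi : ℕ → Measure X,
    (∀ i, νi i ∈ MM μ) ∧ (∀ i, ηi i ∈ MM μ) ∧
    ν = Measure.sum νi ∧ η = Measure.sum ηi ∧
    (∃ S : ℝ, HasSum (fun i => |mass (νi i) - mass (ηi i)|) S ∧ S ≤ δ) ∧
    (∀ i, Metric.diam (msupp (νi i) ∪ msupp (ηi i)) ≤ ε)

/-- The mass transport metric `d_𝓜`. -/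
noncomputable def dM (h : ℝ → ℝ) (μ : Measure X) (ν η : Measure X) : ℝ :=
  sInf {ε : ℝ | 0 < ε ∧ GammaDecomp μ ε (h ε) ν η}

/-- A rectifiable curve in `𝓜` subparametrized by arc-length: a `1`-Lipschitz map
`[0,b] → (𝓜, d_𝓜)`. -/
def IsCurveM (h : ℝ → ℝ) (μ : Measure X) (b : ℝ) (γ : ℝ → Measure X) : Prop :=
  0 ≤ b ∧ (∀ t ∈ Icc (0:ℝ) b, γ t ∈ MM μ) ∧
  ∀ s ∈ Icc (0:ℝ) b, ∀ t ∈ Icc (0:ℝ) b, dM h μ (γ s) (γ t) ≤ |s - t|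

/-- A rectifiable curve in `𝓧 = 𝓜 \ {0}` subparametrized by arc-length. -/
def IsCurveX (h : ℝ → ℝ) (μ : Measure X) (b : ℝ) (γ : ℝ → Measure X) : Prop :=
  IsCurveM h μ b γ ∧ ∀ t ∈ Icc (0:ℝ) b, γ t ≠ 0

/-- The mean value functional `F_f(η) = (1/‖η‖) ∫ f dη`. -/
noncomputable def FfM (f : X → ℝ) (η : Measure X) : ℝ := (∫ x, f x ∂η) / mass η

/-- `r_F^ε(η)`. -/
noncomputable def rGradE (h : ℝ → ℝ) (μ : Measure X) (F : Measure X → ℝ) (ε : ℝ)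
    (η : Measure X) : ℝ≥0∞ :=
  sSup {r : ℝ≥0∞ | ∃ (b : ℝ) (γ : ℝ → Measure X) (s : ℝ),
    IsCurveX h μ b γ ∧ γ 0 = η ∧ 0 < s ∧ s < ε ∧ s < b ∧
    r = ENNReal.ofReal (|F (γ s) - F η| / s)}

/-- The upper gradient `r_F(η) = lim_{ε→0} r_F^ε(η)`. -/
noncomputable def rGrad (h : ℝ → ℝ) (μ : Measure X) (F : Measure X → ℝ)
    (η : Measure X) : ℝ≥0∞ :=
  ⨅ (ε : ℝ) (_ : 0 < ε), rGradE h μ F ε η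

/-- Upper semicontinuous regularization along curves of `g : 𝓧 → [0,∞]`. -/
noncomputable def breveG (h : ℝ → ℝ) (μ : Measure X) (g : Measure X → ℝ≥0∞)
    (η : Measure X) : ℝ≥0∞ :=
  ⨅ (s : ℝ) (_ : 0 < s), sSup {r : ℝ≥0∞ | ∃ (b : ℝ) (γ : ℝ → Measure X) (t : ℝ),
    IsCurveX h μ b γ ∧ γ 0 = η ∧ 0 ≤ t ∧ t < s ∧ t ≤ b ∧ r = g (γ t)}

/-- `sup { Σᵢ G(ηᵢ)^p ‖ηᵢ‖ }` over finite disjointly supported families in `𝓧`. -/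
noncomputable def LpPow (μ : Measure X) (p : ℝ) (G : Measure X → ℝ≥0∞) : ℝ≥0∞ :=
  sSup {r : ℝ≥0∞ | ∃ (k : ℕ) (η : Fin k → Measure X),
    (∀ i, η i ∈ MM μ ∧ η i ≠ 0) ∧
    (∀ i j, i ≠ j → Disjoint (msupp (η i)) (msupp (η j))) ∧
    r = ∑ i, (G (η i)) ^ p * (η i) Set.univ}

/-- The `𝓛^p(𝓧)` norm of `F : 𝓧 → ℝ`. -/
noncomputable def LpNorm (μ : Measure X) (p : ℝ) (F : Measure X → ℝ) : ℝ≥0∞ :=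
  (LpPow μ p (fun η => ENNReal.ofReal |F η|)) ^ (1 / p)

/-- The `𝓛^p(𝓧)` norm for an extended exponent `p ∈ [1,∞]`. -/
noncomputable def LpNormE (μ : Measure X) (p : ℝ≥0∞) (F : Measure X → ℝ) : ℝ≥0∞ :=
  if p = ∞ then ⨆ (η : Measure X) (_ : η ∈ MM μ ∧ η ≠ 0), ENNReal.ofReal |F η|
  else LpNorm μ p.toReal F


/-- The linear interpolation path `(1−t)η + tν` in `𝓜`. -/
noncomputable def pathMix {X : Type*} [MetricSpace X] [MeasurableSpace X]
    (η ν : Measure X) (t : ℝ) : Measure X :=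
  ENNReal.ofReal (1 - t) • η + ENNReal.ofReal t • ν

lemma msupp_eq_support {X : Type*} [MetricSpace X] [MeasurableSpace X] (ν : Measure X) :
    msupp ν = ν.support := by
  ext x
  rw [Metric.nhds_basis_ball.mem_measureSupport]
  rfl

lemma MM_finite {X : Type*} [MetricSpace X] [MeasurableSpace X] [BorelSpace X]
    [TopologicalSpace.SeparableSpace X] (μ : Measure X) [μ.Regular]
    {ν : Measure X} (hν : ν ∈ MM μ) : IsFiniteMeasure ν := by
  have : SecondCountableTopology X := UniformSpace.secondCountable_of_separable X
  obtain ⟨h1, h2⟩ := hν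
  rw [msupp_eq_support] at h2
  constructor
  have h3 : ν Set.univ ≤ ν ν.support + ν (ν.support)ᶜ := by
    rw [← Set.union_compl_self ν.support]; exact measure_union_le _ _
  rw [Measure.measure_compl_support, add_zero] at h3
  exact (h3.trans (h1 _)).trans_lt h2.measure_lt_top

lemma msupp_pathMix {X : Type*} [MetricSpace X] [MeasurableSpace X] (η ν : Measure X) (t : ℝ) :
    msupp (pathMix η ν t) ⊆ msupp η ∪ msupp ν := by
  simp only [msupp_eq_support, pathMix, Measure.support_add]
  exact Set.union_subset_union
    (Measure.AbsolutelyContinuous.support_mono Measure.smul_absolutelyContinuous)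
    (Measure.AbsolutelyContinuous.support_mono Measure.smul_absolutelyContinuous)

lemma isClosed_msupp {X : Type*} [MetricSpace X] [MeasurableSpace X] (ν : Measure X) :
    IsClosed (msupp ν) := by
  rw [msupp_eq_support]; exact Measure.isClosed_support

lemma pathMix_mem {X : Type*} [MetricSpace X] [MeasurableSpace X] {μ η ν : Measure X}
    (hη : η ∈ MM μ) (hν : ν ∈ MM μ) {t : ℝ} (ht : t ∈ Icc (0:ℝ) 1) : pathMix η ν t ∈ MM μ := by
  refine ⟨?_, (hη.2.union hν.2).of_isClosed_subset (isClosed_msupp _) (msupp_pathMix _ _ _)⟩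
  have hsum : ENNReal.ofReal (1 - t) + ENNReal.ofReal t = 1 := by
    rw [← ENNReal.ofReal_add (by linarith [ht.2]) ht.1]; simp
  intro s
  have h1 := hη.1 s
  have h2 := hν.1 s
  simp only [pathMix, Measure.coe_add, Measure.coe_smul, Pi.add_apply, Pi.smul_apply, smul_eq_mul]
  calc ENNReal.ofReal (1 - t) * η s + ENNReal.ofReal t * ν s
      ≤ ENNReal.ofReal (1 - t) * μ s + ENNReal.ofReal t * μ s := by gcongr
    _ = μ s := by rw [← add_mul, hsum, one_mul]

lemma mass_pathMix {X : Type*} [MetricSpace X] [MeasurableSpace X] (η ν : Measure X)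
    [IsFiniteMeasure η] [IsFiniteMeasure ν] {t : ℝ} (ht : t ∈ Icc (0:ℝ) 1) :
    mass (pathMix η ν t) = (1 - t) * mass η + t * mass ν := by
  simp only [mass, pathMix, Measure.coe_add, Measure.coe_smul, Pi.add_apply, Pi.smul_apply,
    smul_eq_mul]
  rw [ENNReal.toReal_add (ENNReal.mul_ne_top ENNReal.ofReal_ne_top (measure_ne_top _ _))
    (ENNReal.mul_ne_top ENNReal.ofReal_ne_top (measure_ne_top _ _)),
    ENNReal.toReal_mul, ENNReal.toReal_mul, ENNReal.toReal_ofReal (by linarith [ht.2]),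
    ENNReal.toReal_ofReal ht.1]

lemma pathMix_sum {X : Type*} [MetricSpace X] [MeasurableSpace X] (η ν : ℕ → Measure X) (t : ℝ) :
    pathMix (Measure.sum η) (Measure.sum ν) t = Measure.sum (fun i => pathMix (η i) (ν i) t) := by
  ext s hs
  simp only [pathMix, Measure.coe_add, Measure.coe_smul, Pi.add_apply, Pi.smul_apply, smul_eq_mul,
    Measure.sum_apply _ hs]
  rw [ENNReal.tsum_add, ENNReal.tsum_mul_left, ENNReal.tsum_mul_left]

lemma exists_part {X : Type*} [MetricSpace X] [MeasurableSpace X] [BorelSpace X]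
    [TopologicalSpace.SeparableSpace X] (ε : ℝ) (hε : 0 < ε) :
    ∃ B : ℕ → Set X, (∀ i, MeasurableSet (B i)) ∧ Pairwise (Function.onFun Disjoint B) ∧
      (⋃ i, B i) = Set.univ ∧
      ∀ i, ∃ C, B i ⊆ C ∧ IsClosed C ∧ Bornology.IsBounded C ∧ Metric.diam C ≤ ε := by
  rcases isEmpty_or_nonempty X with hX | hX
  · refine ⟨fun _ => ∅, by simp, ?_, ?_, fun i => ⟨∅, by simp [hε.le]⟩⟩
    · intro i j _; simp [Function.onFun]
    · ext x; exact (hX.false x).elim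
  · let u := TopologicalSpace.denseSeq X
    let A : ℕ → Set X := fun i => Metric.closedBall (u i) (ε / 2)
    refine ⟨disjointed A, fun i => MeasurableSet.disjointed
      (fun i => Metric.isClosed_closedBall.measurableSet) i, disjoint_disjointed A, ?_, fun i => ?_⟩
    · rw [iUnion_disjointed]
      ext x
      simp only [Set.mem_iUnion, Set.mem_univ, iff_true]
      obtain ⟨i, hi⟩ :=
        (TopologicalSpace.denseRange_denseSeq X).exists_dist_lt x (half_pos hε)
      exact ⟨i, hi.le⟩
    · refine ⟨A i, disjointed_subset A i, Metric.isClosed_closedBall,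
        Metric.isBounded_closedBall, ?_⟩
      have := Metric.diam_closedBall (x := u i) (half_pos hε).le
      linarith

lemma sum_restrict_part {X : Type*} [MeasurableSpace X] {B : ℕ → Set X}
    (hm : ∀ i, MeasurableSet (B i)) (hd : Pairwise (Function.onFun Disjoint B))
    (hU : (⋃ i, B i) = Set.univ) (ν : Measure X) :
    ν = Measure.sum (fun i => ν.restrict (B i)) := by
  rw [← Measure.restrict_iUnion hd hm, hU, Measure.restrict_univ]

lemma hasSum_mass_restrict {X : Type*} [MetricSpace X] [MeasurableSpace X] {B : ℕ → Set X}
    (hm : ∀ i, MeasurableSet (B i)) (hd : Pairwise (Function.onFun Disjoint B))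
    (hU : (⋃ i, B i) = Set.univ) (ν : Measure X) [IsFiniteMeasure ν] :
    HasSum (fun i => mass (ν.restrict (B i))) (mass ν) := by
  have h1 : ν Set.univ = ∑' i, ν (B i) := by rw [← hU]; exact measure_iUnion hd hm
  simp only [mass, Measure.restrict_apply_univ]
  rw [h1, ENNReal.tsum_toReal_eq (fun i => measure_ne_top _ _)]
  exact (ENNReal.summable_toReal (h1 ▸ measure_ne_top _ _)).hasSum

lemma dM_le {X : Type*} [MetricSpace X] [MeasurableSpace X] {h : ℝ → ℝ} {μ η ν : Measure X}
    {ε : ℝ} (hε : 0 < ε) (hG : GammaDecomp μ ε (h ε) η ν) : dM h μ η ν ≤ ε :=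
  csInf_le ⟨0, fun _ hx => hx.1.le⟩ ⟨hε, hG⟩

lemma restrict_mem {X : Type*} [MetricSpace X] [MeasurableSpace X] [BorelSpace X]
    {μ ν : Measure X} (hν : ν ∈ MM μ) (B : Set X) : ν.restrict B ∈ MM μ := by
  refine ⟨Measure.restrict_le_self.trans hν.1, hν.2.of_isClosed_subset (isClosed_msupp _) ?_⟩
  simp only [msupp_eq_support]
  exact Measure.support_mono Measure.restrict_le_self

lemma msupp_restrict {X : Type*} [MetricSpace X] [MeasurableSpace X] [BorelSpace X]
    (ν : Measure X) {B C : Set X} (hBC : B ⊆ C) (hC : IsClosed C) : msupp (ν.restrict B) ⊆ C := by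
  rw [msupp_eq_support]
  exact Measure.support_restrict_subset.trans
    (Set.inter_subset_left.trans (closure_minimal hBC hC))

lemma pathMix_restrict {X : Type*} [MetricSpace X] [MeasurableSpace X] (η ν : Measure X)
    (B : Set X) (t : ℝ) :
    (pathMix η ν t).restrict B = pathMix (η.restrict B) (ν.restrict B) t := by
  simp only [pathMix, Measure.restrict_add, Measure.restrict_smul]

lemma pathMix_close {X : Type*} [MetricSpace X] [MeasurableSpace X] [BorelSpace X]
    [TopologicalSpace.SeparableSpace X] (μ : Measure X) [μ.Regular] {h : ℝ → ℝ}
    {η ν : Measure X} (hη : η ∈ MM μ) (hν : ν ∈ MM μ) {s t ε : ℝ} (hs : s ∈ Icc (0:ℝ) 1)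
    (ht : t ∈ Icc (0:ℝ) 1) (hε : 0 < ε) (hst : |s - t| * (mass η + mass ν) ≤ h ε) :
    dM h μ (pathMix η ν s) (pathMix η ν t) ≤ ε := by
  obtain ⟨B, hm, hd, hU, hC⟩ := exists_part (X := X) ε hε
  have := MM_finite μ hη
  have := MM_finite μ hν
  have h1 := hasSum_mass_restrict hm hd hU η
  have h2 := hasSum_mass_restrict hm hd hU ν
  have h3 := (h1.add h2).mul_left |s - t|
  have hle : ∀ i, |mass ((pathMix η ν s).restrict (B i)) - mass ((pathMix η ν t).restrict (B i))|
      ≤ |s - t| * (mass (η.restrict (B i)) + mass (ν.restrict (B i))) := by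
    intro i
    rw [pathMix_restrict, pathMix_restrict, mass_pathMix _ _ hs, mass_pathMix _ _ ht]
    have e1 : 0 ≤ mass (η.restrict (B i)) := ENNReal.toReal_nonneg
    have e2 : 0 ≤ mass (ν.restrict (B i)) := ENNReal.toReal_nonneg
    generalize mass (η.restrict (B i)) = a at *
    generalize mass (ν.restrict (B i)) = b at *
    have : (1 - s) * a + s * b - ((1 - t) * a + t * b) = (s - t) * (b - a) := by ring
    rw [this, abs_mul]
    apply mul_le_mul_of_nonneg_left _ (abs_nonneg _)
    rw [abs_le]; constructor <;> linarith
  have hsm := Summable.of_nonneg_of_le (fun i => abs_nonneg _) hle h3.summable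
  refine dM_le hε ⟨fun i => (pathMix η ν s).restrict (B i), fun i => (pathMix η ν t).restrict (B i),
    fun i => restrict_mem (pathMix_mem hη hν hs) _, fun i => restrict_mem (pathMix_mem hη hν ht) _,
    sum_restrict_part hm hd hU _, sum_restrict_part hm hd hU _,
    ⟨_, hsm.hasSum, (hasSum_le hle hsm.hasSum h3).trans hst⟩, fun i => ?_⟩
  obtain ⟨C, hBC, hCc, hCb, hCd⟩ := hC i
  exact (Metric.diam_mono (Set.union_subset (msupp_restrict _ hBC hCc)
    (msupp_restrict _ hBC hCc)) hCb).trans hCd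

lemma msupp_zero {X : Type*} [MetricSpace X] [MeasurableSpace X] :
    msupp (0 : Measure X) = ∅ := by
  rw [msupp_eq_support, Measure.support_zero]

lemma gamma_nonempty {X : Type*} [MetricSpace X] [MeasurableSpace X]
    {μ : Measure X} {h : ℝ → ℝ} (hh : IsGauge h)
    {η ν : Measure X} (hη : η ∈ MM μ) (hν : ν ∈ MM μ) :
    {ε : ℝ | 0 < ε ∧ GammaDecomp μ ε (h ε) η ν}.Nonempty := by
  obtain ⟨-, -, -, -, -, hT⟩ := hh
  obtain ⟨ε, h1, h2, h3⟩ := ((eventually_gt_atTop (0:ℝ)).and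
    ((hT.eventually_ge_atTop |mass η - mass ν|).and
      (eventually_ge_atTop (Metric.diam (msupp η ∪ msupp ν))))).exists
  have hz : (0 : Measure X) ∈ MM μ := ⟨Measure.zero_le _, by rw [msupp_zero]; exact isCompact_empty⟩
  have hsum : ∀ θ : Measure X, θ = Measure.sum (fun i : ℕ => if i = 0 then θ else 0) := by
    intro θ
    ext s hs
    rw [Measure.sum_apply _ hs, tsum_eq_single 0 (by intro b hb; simp [hb])]
    simp
  refine ⟨ε, h1, fun i => if i = 0 then η else 0, fun i => if i = 0 then ν else 0,
    fun i => ?_, fun i => ?_, hsum η, hsum ν, ⟨|mass η - mass ν|, ?_, h2⟩, fun i => ?_⟩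
  · dsimp only; split_ifs <;> assumption
  · dsimp only; split_ifs <;> assumption
  · have := hasSum_single (f := fun i : ℕ => |mass (if i = 0 then η else 0) -
      mass (if i = 0 then ν else 0)|) 0 (by intro b hb; simp [hb])
    simpa using this
  · dsimp only; split_ifs
    · exact h3
    · simp [msupp_zero, h1.le]

lemma gamma_mix {X : Type*} [MetricSpace X] [MeasurableSpace X] [BorelSpace X]
    [TopologicalSpace.SeparableSpace X] (μ : Measure X) [μ.Regular]
    {η ν : Measure X} {t ε δ : ℝ} (ht : t ∈ Icc (0:ℝ) 1)
    (hG : GammaDecomp μ ε δ η ν) : GammaDecomp μ ε δ η (pathMix η ν t) := by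
  obtain ⟨ηi, νi, h1, h2, rfl, rfl, ⟨S, hS, hSδ⟩, hdiam⟩ := hG
  have hS0 : 0 ≤ S := hS.nonneg (fun i => abs_nonneg _)
  refine ⟨ηi, fun i => pathMix (ηi i) (νi i) t, h1, fun i => pathMix_mem (h1 i) (h2 i) ht, rfl,
    pathMix_sum _ _ _, ⟨t * S, ?_, (mul_le_of_le_one_left hS0 ht.2).trans hSδ⟩, fun i => ?_⟩
  · have hfun : (fun i => |mass (ηi i) - mass (pathMix (ηi i) (νi i) t)|) =
        fun i => t * |mass (ηi i) - mass (νi i)| := by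
      funext i
      have := MM_finite μ (h1 i)
      have := MM_finite μ (h2 i)
      rw [mass_pathMix _ _ ht]
      conv_rhs => rw [← abs_of_nonneg ht.1, ← abs_mul]
      congr 1; ring
    rw [hfun]
    exact hS.mul_left t
  · exact (Metric.diam_mono (Set.union_subset Set.subset_union_left (msupp_pathMix _ _ _))
      ((h1 i).2.union (h2 i).2).isBounded).trans (hdiam i)

/-- `(𝓜, d_𝓜)` is path-connected via `t ↦ (1−t)η + tν`, and moreover
`d_𝓜(η, (1−t)η + tν) ≤ d_𝓜(η,ν)`. -/
theorem stmt8 {X : Type*} [MetricSpace X] [MeasurableSpace X] [BorelSpace X]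
    [LocallyCompactSpace X] [TopologicalSpace.SeparableSpace X]
    (μ : Measure X) [μ.Regular]
    (hμ : ∀ (x : X) (r : ℝ), 0 < r → 0 < μ (Metric.ball x r) ∧ μ (Metric.ball x r) < ⊤)
    (h : ℝ → ℝ) (hh : IsGauge h)
    (η ν : Measure X) (hη : η ∈ MM μ) (hν : ν ∈ MM μ) :
    (∀ t ∈ Icc (0:ℝ) 1, pathMix η ν t ∈ MM μ) ∧
    pathMix η ν 0 = η ∧ pathMix η ν 1 = ν ∧
    (∀ t ∈ Icc (0:ℝ) 1, ∀ ε : ℝ, 0 < ε → ∃ δ : ℝ, 0 < δ ∧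
      ∀ s ∈ Icc (0:ℝ) 1, |s - t| < δ → dM h μ (pathMix η ν s) (pathMix η ν t) ≤ ε) ∧
    (∀ t ∈ Icc (0:ℝ) 1, dM h μ η (pathMix η ν t) ≤ dM h μ η ν) := by
  refine ⟨fun t ht => pathMix_mem hη hν ht, by simp [pathMix], by simp [pathMix],
    fun t ht ε hε => ?_, fun t ht => ?_⟩
  · have hpos : 0 < h ε := by
      have := hh.1 (Set.mem_Ici.2 le_rfl) (Set.mem_Ici.2 hε.le) hε
      rwa [hh.2.2.1] at this
    have e1 : 0 ≤ mass η := ENNReal.toReal_nonneg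
    have e2 : 0 ≤ mass ν := ENNReal.toReal_nonneg
    have hM : 0 < mass η + mass ν + 1 := by linarith
    refine ⟨h ε / (mass η + mass ν + 1), div_pos hpos hM, fun s hs hst => ?_⟩
    refine pathMix_close μ hη hν hs ht hε ?_
    rw [lt_div_iff₀ hM] at hst
    nlinarith [abs_nonneg (s - t)]
  · refine le_csInf (gamma_nonempty hh hη hν) ?_
    rintro ε ⟨hε, hG⟩
    exact dM_le hε (gamma_mix μ ht hG)
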